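/- Let b, λ ∈ ℂ with |b| < 1 and |λ| = 1, and let γ(z) = λ·(z − b)/(1 − conj(b)·z). Then for every measurable function h : ℂ → [0, ∞], ∫_0^{2π} h(γ(e^{iθ}))·|γ′(e^{iθ})| dθ = ∫_0^{2π} h(e^{iθ}) dθ, where γ′ denotes the complex derivative of γ. -/

import Mathlib

open Complex MeasureTheory ENNReal

/-- A continuous strictly monotone real function maps `(a, b]` onto `(f a, f b]`. -/
lemma image_Ioc_of_strictMono_continuous {f : ℝ → ℝ} (hf : StrictMono f) (hc : Continuous f)
    {a b : ℝ} (hab : a ≤ b) : f '' Set.Ioc a b = Set.Ioc (f a) (f b) := by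
  apply Set.Subset.antisymm
  · rintro _ ⟨x, hx, rfl⟩
    exact ⟨hf hx.1, hf.monotone hx.2⟩
  · exact intermediate_value_Ioc hab hc.continuousOn

/-- The lower integral of a periodic function over a period does not depend on the period. -/
lemma setLIntegral_Ioc_eq_of_periodic {g : ℝ → ℝ≥0∞} {T : ℝ} (hT : 0 < T)
    (hg : Function.Periodic g T) (s t : ℝ) :
    ∫⁻ x in Set.Ioc s (s + T), g x = ∫⁻ x in Set.Ioc t (t + T), g x := by
  have : Fact (0 < T) := ⟨hT⟩
  have key (a : ℝ) := AddCircle.lintegral_preimage T a hg.lift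
  simp only [Function.Periodic.lift_coe] at key
  rw [key, key]

/-- An angular lift of the Möbius map `z ↦ l * (z - b) / (1 - conj b * z)` on the circle. -/
noncomputable def moebiusAngle (b l : ℂ) (θ : ℝ) : ℝ :=
  arg l + θ - 2 * (Complex.log (1 - (starRingEnd ℂ) b * exp (θ * I))).im

lemma one_sub_mem_slitPlane {u : ℂ} (hu : ‖u‖ < 1) : 1 - u ∈ slitPlane := by
  left
  have := re_le_norm u
  simp only [sub_re, one_re]
  linarith

lemma norm_conj_mul_exp_lt_one {b : ℂ} (hb : ‖b‖ < 1) (θ : ℝ) :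
    ‖(starRingEnd ℂ) b * exp (θ * I)‖ < 1 := by
  simpa [norm_exp_ofReal_mul_I] using hb

lemma moebiusAngle_add_two_pi (b l : ℂ) (θ : ℝ) :
    moebiusAngle b l (θ + 2 * Real.pi) = moebiusAngle b l θ + 2 * Real.pi := by
  have : exp (((θ + 2 * Real.pi : ℝ) : ℂ) * I) = exp (θ * I) := by
    push_cast
    rw [add_mul]
    exact exp_periodic _
  simp only [moebiusAngle, this]
  ring

/-- Exponentiating the angular lift recovers the Möbius map on the circle. -/
lemma exp_moebiusAngle {b l : ℂ} (hb : ‖b‖ < 1) (hl : ‖l‖ = 1) (θ : ℝ) :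
    exp (moebiusAngle b l θ * I) =
      l * (exp (θ * I) - b) / (1 - (starRingEnd ℂ) b * exp (θ * I)) := by
  have hw := slitPlane_ne_zero (one_sub_mem_slitPlane (norm_conj_mul_exp_lt_one hb θ))
  set w := 1 - (starRingEnd ℂ) b * exp (θ * I) with hw_def
  have hl' : exp (arg l * I) = l := by
    simpa [hl] using norm_mul_exp_arg_mul_I l
  have hpolar := norm_mul_exp_arg_mul_I w
  have hee : exp (θ * I) * exp (-(θ * I)) = 1 := by rw [← exp_add]; simp
  have hconj : exp (θ * I) * (starRingEnd ℂ) w = exp (θ * I) - b := by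
    have : (starRingEnd ℂ) (exp (θ * I)) = exp (-(θ * I)) := by
      rw [← exp_conj]; simp
    rw [hw_def, map_sub, map_mul, this, map_one, conj_conj]
    linear_combination (-b) * hee
  have hmul : w * (starRingEnd ℂ) w = (‖w‖ : ℂ) ^ 2 := mul_conj' w
  have hexp : exp (moebiusAngle b l θ * I) * exp (arg w * I) ^ 2 = l * exp (θ * I) := by
    rw [← exp_nat_mul, ← exp_add]
    nth_rewrite 2 [← hl']
    rw [← exp_add]
    congr 1
    simp only [moebiusAngle, log_im, ← hw_def]
    push_cast
    ring
  rw [eq_div_iff hw, ← hconj]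
  apply mul_right_cancel₀ hw
  have h2 : w ^ 2 = (‖w‖ : ℂ) ^ 2 * exp (arg w * I) ^ 2 := by
    rw [← mul_pow, hpolar]
  linear_combination exp (moebiusAngle b l θ * I) * h2 + (‖w‖ : ℂ) ^ 2 * hexp
    - l * exp (θ * I) * hmul

lemma hasDerivAt_moebiusAngle {b : ℂ} (hb : ‖b‖ < 1) (l : ℂ) (θ : ℝ) :
    HasDerivAt (moebiusAngle b l)
      ((1 - ‖b‖ ^ 2) / ‖1 - (starRingEnd ℂ) b * exp (θ * I)‖ ^ 2) θ := by
  have hmem := one_sub_mem_slitPlane (norm_conj_mul_exp_lt_one hb θ)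
  have hw := slitPlane_ne_zero hmem
  have he : HasDerivAt (fun t : ℝ => exp (t * I)) (exp (θ * I) * (1 * I)) θ :=
    ((hasDerivAt_id θ).ofReal_comp.mul_const I).cexp
  have hlog := ((he.const_mul ((starRingEnd ℂ) b)).const_sub 1).clog_real hmem
  have him := imCLM.hasFDerivAt.comp_hasDerivAt θ hlog
  have hmain := ((hasDerivAt_id θ).const_add (arg l)).sub (him.const_mul 2)
  refine HasDerivAt.congr_deriv (f := moebiusAngle b l) hmain ?_
  have hu : ‖(starRingEnd ℂ) b * exp (θ * I)‖ = ‖b‖ := by simp [norm_exp_ofReal_mul_I]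
  rw [← hu, Complex.sq_norm, Complex.sq_norm]
  have hns : normSq (1 - (starRingEnd ℂ) b * exp (θ * I)) ≠ 0 := by simpa using hw
  rw [show (starRingEnd ℂ) b * (exp (θ * I) * (1 * I))
    = ((starRingEnd ℂ) b * exp (θ * I)) * I by ring]
  generalize (starRingEnd ℂ) b * exp (θ * I) = u at hns ⊢
  simp only [imCLM_apply, div_im, neg_im, neg_re, mul_im, mul_re, I_re, I_im, sub_re, sub_im,
    one_re, one_im]
  field_simp
  simp only [normSq_apply, sub_re, sub_im, one_re, one_im]
  ring

lemma hasDerivAt_moebius {b z : ℂ} (l : ℂ) (hz : 1 - (starRingEnd ℂ) b * z ≠ 0) :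
    HasDerivAt (fun z => l * (z - b) / (1 - (starRingEnd ℂ) b * z))
      (l * (1 - (‖b‖ : ℂ) ^ 2) / (1 - (starRingEnd ℂ) b * z) ^ 2) z := by
  have hnum := ((hasDerivAt_id z).sub_const b).const_mul l
  have hden := ((hasDerivAt_id z).const_mul ((starRingEnd ℂ) b)).const_sub 1
  refine (hnum.div hden hz).congr_deriv ?_
  rw [← mul_conj' b]
  simp only [id]
  ring

/-- Change of variables on the circle for a Möbius automorphism `γ` of the disc:
`∫_0^{2π} h(γ(e^{iθ}))·|γ′(e^{iθ})| dθ = ∫_0^{2π} h(e^{iθ}) dθ` for every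
measurable `h : ℂ → [0, ∞]`. -/
theorem circle_change_of_variables (b l : ℂ) (hb : ‖b‖ < 1) (hl : ‖l‖ = 1)
    (γ : ℂ → ℂ) (hγ : ∀ z, γ z = l * (z - b) / (1 - (starRingEnd ℂ) b * z)) :
    ∀ h : ℂ → ℝ≥0∞, Measurable h →
      ∫⁻ θ in Set.Ioc (0 : ℝ) (2 * Real.pi),
          h (γ (Complex.exp ((θ : ℂ) * Complex.I))) *
            (‖deriv γ (Complex.exp ((θ : ℂ) * Complex.I))‖₊ : ℝ≥0∞)
        = ∫⁻ θ in Set.Ioc (0 : ℝ) (2 * Real.pi), h (Complex.exp ((θ : ℂ) * Complex.I)) := by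
  intro h _
  have hw (θ : ℝ) : 1 - (starRingEnd ℂ) b * exp (θ * I) ≠ 0 :=
    slitPlane_ne_zero (one_sub_mem_slitPlane (norm_conj_mul_exp_lt_one hb θ))
  have hb2 : 0 < 1 - ‖b‖ ^ 2 := by nlinarith [norm_nonneg b]
  have hpos (θ : ℝ) : 0 < (1 - ‖b‖ ^ 2) / ‖1 - (starRingEnd ℂ) b * exp (θ * I)‖ ^ 2 :=
    div_pos hb2 (pow_pos (norm_pos_iff.mpr (hw θ)) 2)
  have hderiv := hasDerivAt_moebiusAngle hb l
  have hmono : StrictMono (moebiusAngle b l) :=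
    strictMono_of_deriv_pos fun θ => (hderiv θ).deriv ▸ hpos θ
  have hcont : Continuous (moebiusAngle b l) :=
    continuous_iff_continuousAt.mpr fun θ => (hderiv θ).continuousAt
  have himage : moebiusAngle b l '' Set.Ioc 0 (2 * Real.pi) =
      Set.Ioc (moebiusAngle b l 0) (moebiusAngle b l 0 + 2 * Real.pi) := by
    rw [image_Ioc_of_strictMono_continuous hmono hcont Real.two_pi_pos.le,
      ← moebiusAngle_add_two_pi, zero_add]
  have hper : Function.Periodic (fun θ : ℝ => h (exp (θ * I))) (2 * Real.pi) := fun θ => by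
    simp only
    push_cast
    rw [add_mul, exp_periodic]
  have hchange := lintegral_image_eq_lintegral_abs_deriv_mul measurableSet_Ioc
    (fun θ _ => (hderiv θ).hasDerivWithinAt) hmono.injective.injOn (s := Set.Ioc 0 (2 * Real.pi))
    (fun θ => h (exp (θ * I)))
  rw [himage, setLIntegral_Ioc_eq_of_periodic Real.two_pi_pos hper _ 0, zero_add] at hchange
  rw [hchange]
  refine lintegral_congr fun θ => ?_
  have hnorm : ‖deriv γ (exp (θ * I))‖ =
      (1 - ‖b‖ ^ 2) / ‖1 - (starRingEnd ℂ) b * exp (θ * I)‖ ^ 2 := by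
    rw [funext hγ, (hasDerivAt_moebius l (hw θ)).deriv, norm_div, norm_mul, hl, one_mul, norm_pow]
    congr 1
    rw [← Complex.ofReal_pow, ← Complex.ofReal_one, ← Complex.ofReal_sub, norm_real, Real.norm_of_nonneg hb2.le]
  rw [exp_moebiusAngle hb hl, ← hγ, mul_comm, abs_of_pos (hpos θ), ← hnorm, ofReal_norm]
  rfl
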